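/- Let A generate an α-times resolvent family {S_α(t)}_{t≥0} on X, where 1 < α < 2, let r > 0, let f : [0,r] → X be continuous and x, y ∈ D(A). If (P_α*f)(t) ∈ D(A) for every t ∈ [0,r] and the map t ↦ A((P_α*f)(t)) is continuous on [0,r], then u(t) = S_α(t)x + ∫_0^t S_α(s)y ds + (P_α*f)(t) is a strong solution of D_t^α u = Au + f on [0,r] with u(0) = x, u'(0) = y. -/

import Mathlib

open MeasureTheory Set

/-- `g β t = t^(β-1)/Γ(β)`. -/
noncomputable def g (β t : ℝ) : ℝ := t ^ (β - 1) / Real.Gamma β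

/-- `Pa α S t x = (g_{α-1} * S)(t) x = ∫_0^t g_{α-1}(t-s) S(s) x ds`. -/
noncomputable def Pa {X : Type*} [NormedAddCommGroup X] [NormedSpace ℂ X]
    (α : ℝ) (S : ℝ → X →L[ℂ] X) (t : ℝ) (x : X) : X :=
  ∫ s in (0:ℝ)..t, g (α - 1) (t - s) • S s x

/-- `u` is a strong solution of `D_t^α u = A u + f` on `[0, r]`, `u 0 = x`, `u' 0 = y`:
`u` takes values in `D(A)` with `t ↦ A u t` continuous (encoded via the graph of `A`),
`u` is continuously differentiable on `[0, r]`,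
`w t = ∫_0^t g_{2-α}(t-s) (u s - x - s y) ds` is twice continuously differentiable
on `[0, r]`, and `w'' t = A (u t) + f t` there. -/
def IsStrongSolution {X : Type*} [NormedAddCommGroup X] [NormedSpace ℂ X]
    (α : ℝ) (A : X →ₗ.[ℂ] X) (r : ℝ) (f : ℝ → X) (x y : X) (u : ℝ → X) : Prop :=
  ∃ Au u' w' w'' : ℝ → X,
    ContinuousOn u (Set.Icc 0 r) ∧
    (∀ t ∈ Set.Icc (0:ℝ) r, (u t, Au t) ∈ A.graph) ∧
    ContinuousOn Au (Set.Icc 0 r) ∧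
    (∀ t ∈ Set.Icc (0:ℝ) r, HasDerivWithinAt u (u' t) (Set.Icc 0 r) t) ∧
    ContinuousOn u' (Set.Icc 0 r) ∧
    (∀ t ∈ Set.Icc (0:ℝ) r,
      HasDerivWithinAt (fun τ => ∫ s in (0:ℝ)..τ, g (2 - α) (τ - s) • (u s - x - s • y))
        (w' t) (Set.Icc 0 r) t) ∧
    (∀ t ∈ Set.Icc (0:ℝ) r, HasDerivWithinAt w' (w'' t) (Set.Icc 0 r) t) ∧
    ContinuousOn w'' (Set.Icc 0 r) ∧
    (∀ t ∈ Set.Icc (0:ℝ) r, w'' t = Au t + f t) ∧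
    u 0 = x ∧ u' 0 = y

/-!
Write `J^β φ = g_β * φ`, `F = S_α * f` and `w = A (P_α * f)`. The semigroup law
`J^a J^b = J^{a+b}` turns any `u` with `u = x + t y + J^α h`, `h = A u + f`, into a strong solution:
`u' = y + J^{α-1} h` and `J^{2-α} (u - x - t y) = J² h`. For `S_α(t) x + ∫_0^t S_α(s) y ds` the
integral equation is the resolvent equation. For `P_α * f = J^{α-1} F` it comes from computing
`A J^α F` twice. The resolvent equation, extended from `D(A)` to `X` by density and closedness,
gives `A J^α F = F - J^1 f`; integrating the hypothesis gives `A J^α F = J^1 w`. Hence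
`F = J^1 (w + f)`, and applying `J^{α-1}` yields `P_α * f = J^α (w + f)`.
-/

section Triangle

variable {E : Type*} [NormedAddCommGroup E]

/-- The closed triangle `0 ≤ s ≤ u ≤ r` in the `(u, s)`-plane, over which the iterated integrals
of Volterra type are taken. -/
def triangle (r : ℝ) : Set (ℝ × ℝ) := {p | 0 ≤ p.2 ∧ p.2 ≤ p.1 ∧ p.1 ≤ r}

lemma isCompact_triangle (r : ℝ) : IsCompact (triangle r) := by
  have hclosed : IsClosed (triangle r) :=
    (isClosed_le continuous_const continuous_snd).inter
      ((isClosed_le continuous_snd continuous_fst).inter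
        (isClosed_le continuous_fst continuous_const))
  have hbox : IsCompact (Icc 0 r ×ˢ Icc 0 r) := isCompact_Icc.prod isCompact_Icc
  refine hbox.of_isClosed_subset hclosed ?_
  rintro ⟨u, s⟩ ⟨hs, hsu, hu⟩
  exact ⟨⟨hs.trans hsu, hu⟩, hs, hsu.trans hu⟩

lemma measurableSet_triangle (r : ℝ) : MeasurableSet (triangle r) :=
  (isCompact_triangle r).measurableSet

lemma integrableOn_triangle_mul_comp_sub {a b : ℝ → ℝ} {r : ℝ}
    (ha : IntegrableOn a (Icc 0 r)) (hb : IntegrableOn b (Icc 0 r)) :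
    IntegrableOn (fun p : ℝ × ℝ => a p.1 * b (p.1 - p.2)) (triangle r) := by
  have ha' := (integrable_indicator_iff measurableSet_Icc).2 ha
  have hb' := ((integrable_indicator_iff measurableSet_Icc).2 hb).comp_neg
  have hconv := (ha'.convolution_integrand (ContinuousLinearMap.mul ℝ ℝ) hb').swap
  refine (hconv.integrableOn (s := triangle r)).congr_fun ?_ (measurableSet_triangle r)
  rintro ⟨u, s⟩ ⟨hs, hsu, hu⟩
  have hu_mem : u ∈ Icc 0 r := ⟨hs.trans hsu, hu⟩
  have hus_mem : u - s ∈ Icc 0 r := ⟨sub_nonneg.2 hsu, by linarith⟩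
  simp [indicator_of_mem hu_mem, indicator_of_mem hus_mem]

variable [NormedSpace ℝ E]

lemma integral_indicator_triangle_snd (K : ℝ → ℝ → E) (r u : ℝ) :
    ∫ s, (triangle r).indicator (Function.uncurry K) (u, s)
      = (Icc 0 r).indicator (fun u => ∫ s in (0 : ℝ)..u, K u s) u := by
  by_cases hu : u ∈ Icc 0 r
  · have hslice : (fun s => (triangle r).indicator (Function.uncurry K) (u, s))
        = (Icc 0 u).indicator (K u) := by
      ext s
      simp [indicator, triangle, hu.2]
    rw [hslice, integral_indicator measurableSet_Icc, integral_Icc_eq_integral_Ioc,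
      indicator_of_mem hu, intervalIntegral.integral_of_le hu.1]
  · have hslice (s : ℝ) : (u, s) ∉ triangle r := fun h => hu ⟨h.1.trans h.2.1, h.2.2⟩
    simp [hslice, indicator_of_notMem hu]

lemma integral_indicator_triangle_fst (K : ℝ → ℝ → E) (r s : ℝ) :
    ∫ u, (triangle r).indicator (Function.uncurry K) (u, s)
      = (Icc 0 r).indicator (fun s => ∫ u in s..r, K u s) s := by
  by_cases hs : s ∈ Icc 0 r
  · have hslice : (fun u => (triangle r).indicator (Function.uncurry K) (u, s))
        = (Icc s r).indicator (fun u => K u s) := by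
      ext u
      simp [indicator, triangle, hs.1]
    rw [hslice, integral_indicator measurableSet_Icc, integral_Icc_eq_integral_Ioc,
      indicator_of_mem hs, intervalIntegral.integral_of_le hs.2]
  · have hslice (u : ℝ) : (u, s) ∉ triangle r := fun h => hs ⟨h.1, h.2.1.trans h.2.2⟩
    simp [hslice, indicator_of_notMem hs]

lemma intervalIntegrable_integral_triangle {K : ℝ → ℝ → E} {r : ℝ} (hr : 0 ≤ r)
    (hK : IntegrableOn (Function.uncurry K) (triangle r)) :
    IntervalIntegrable (fun s => ∫ u in s..r, K u s) volume 0 r := by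
  rw [intervalIntegrable_iff_integrableOn_Icc_of_le hr,
    ← integrable_indicator_iff measurableSet_Icc]
  simpa only [integral_indicator_triangle_fst] using
    ((integrable_indicator_iff (measurableSet_triangle r)).2 hK).integral_prod_right

lemma integral_integral_triangle_swap {K : ℝ → ℝ → E} {r : ℝ} (hr : 0 ≤ r)
    (hK : IntegrableOn (Function.uncurry K) (triangle r)) :
    ∫ u in (0 : ℝ)..r, ∫ s in (0 : ℝ)..u, K u s = ∫ s in (0 : ℝ)..r, ∫ u in s..r, K u s := by
  have hswap := integral_integral_swap (f := fun u s =>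
    (triangle r).indicator (Function.uncurry K) (u, s))
    ((integrable_indicator_iff (measurableSet_triangle r)).2 hK)
  simpa only [integral_indicator_triangle_snd, integral_indicator_triangle_fst,
    integral_indicator measurableSet_Icc, integral_Icc_eq_integral_Ioc,
    ← intervalIntegral.integral_of_le hr] using hswap

end Triangle

section Kernel

lemma g_one (t : ℝ) : g 1 t = 1 := by simp [g]

lemma intervalIntegrable_g {β : ℝ} (hβ : 0 < β) (a b : ℝ) :
    IntervalIntegrable (g β) volume a b :=
  (intervalIntegral.intervalIntegrable_rpow' (by linarith)).div_const _

lemma intervalIntegrable_g_sub {β : ℝ} (hβ : 0 < β) (t a b : ℝ) :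
    IntervalIntegrable (fun s => g β (t - s)) volume a b := by
  simpa using (intervalIntegrable_g hβ (t - a) (t - b)).comp_sub_left t

lemma g_mul {β t σ : ℝ} (ht : 0 ≤ t) (hσ : 0 ≤ σ) : g β (t * σ) = t ^ (β - 1) * g β σ := by
  rw [g, g, Real.mul_rpow ht hσ, mul_div_assoc]

lemma integral_rpow_mul_sub_rpow {a b t : ℝ} (ha : 0 < a) (hb : 0 < b) (ht : 0 < t) :
    ∫ s in (0 : ℝ)..t, s ^ (a - 1) * (t - s) ^ (b - 1)
      = t ^ (a + b - 1) * (Real.Gamma a * Real.Gamma b / Real.Gamma (a + b)) := by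
  have hcast : ∫ s in (0 : ℝ)..t, (s : ℂ) ^ ((a : ℂ) - 1) * ((t : ℂ) - s) ^ ((b : ℂ) - 1)
      = ((∫ s in (0 : ℝ)..t, s ^ (a - 1) * (t - s) ^ (b - 1) : ℝ) : ℂ) := by
    rw [← intervalIntegral.integral_ofReal]
    refine intervalIntegral.integral_congr fun s hs => ?_
    rw [uIcc_of_le ht.le] at hs
    rw [Complex.ofReal_mul, Complex.ofReal_cpow hs.1, Complex.ofReal_cpow (sub_nonneg.2 hs.2)]
    push_cast
    rfl
  rw [← Complex.ofReal_inj, ← hcast, Complex.betaIntegral_scaled _ _ ht,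
    Complex.betaIntegral_eq_Gamma_mul_div _ _ (by simpa) (by simpa)]
  push_cast [Complex.ofReal_cpow ht.le, ← Complex.Gamma_ofReal]
  rfl

lemma integral_g_sub_mul_g {a b t : ℝ} (ha : 0 < a) (hb : 0 < b) (ht : 0 < t) :
    ∫ s in (0 : ℝ)..t, g a (t - s) * g b s = g (a + b) t := by
  have hbeta := integral_rpow_mul_sub_rpow hb ha ht
  have hΓa := (Real.Gamma_pos_of_pos ha).ne'
  have hΓb := (Real.Gamma_pos_of_pos hb).ne'
  calc ∫ s in (0 : ℝ)..t, g a (t - s) * g b s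
      = ∫ s in (0 : ℝ)..t, s ^ (b - 1) * (t - s) ^ (a - 1) / (Real.Gamma b * Real.Gamma a) := by
        congr 1 with s
        rw [g, g]
        ring
    _ = g (a + b) t := by
        rw [intervalIntegral.integral_div, hbeta, g, add_comm b a]
        field_simp

end Kernel

section FractionalIntegral

variable {E : Type*} [NormedAddCommGroup E] [NormedSpace ℝ E]

/-- The Riemann–Liouville fractional integral `(g_β * φ)(t)` of order `β`; the order `1` gives the
usual primitive. -/
noncomputable def rlIntegral (β : ℝ) (φ : ℝ → E) (t : ℝ) : E :=
  ∫ s in (0 : ℝ)..t, g β (t - s) • φ s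

lemma rlIntegral_zero_right (β : ℝ) (φ : ℝ → E) : rlIntegral β φ 0 = 0 :=
  intervalIntegral.integral_same

lemma rlIntegral_one (φ : ℝ → E) (t : ℝ) : rlIntegral 1 φ t = ∫ s in (0 : ℝ)..t, φ s := by
  simp only [rlIntegral, g_one, one_smul]

lemma rlIntegral_congr {β t : ℝ} {φ ψ : ℝ → E} (ht : 0 ≤ t) (h : EqOn φ ψ (Icc 0 t)) :
    rlIntegral β φ t = rlIntegral β ψ t := by
  refine intervalIntegral.integral_congr fun s hs => ?_
  rw [uIcc_of_le ht] at hs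
  simp only [h hs]

lemma intervalIntegrable_g_sub_smul {β t : ℝ} {φ : ℝ → E} (hβ : 0 < β) (ht : 0 ≤ t)
    (hφ : ContinuousOn φ (Icc 0 t)) :
    IntervalIntegrable (fun s => g β (t - s) • φ s) volume 0 t :=
  (intervalIntegrable_g_sub hβ t 0 t).smul_continuousOn (by rwa [uIcc_of_le ht])

lemma rlIntegral_add {β t : ℝ} {φ ψ : ℝ → E} (hβ : 0 < β) (ht : 0 ≤ t)
    (hφ : ContinuousOn φ (Icc 0 t)) (hψ : ContinuousOn ψ (Icc 0 t)) :
    rlIntegral β (fun s => φ s + ψ s) t = rlIntegral β φ t + rlIntegral β ψ t := by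
  simp only [rlIntegral, smul_add]
  exact intervalIntegral.integral_add (intervalIntegrable_g_sub_smul hβ ht hφ)
    (intervalIntegrable_g_sub_smul hβ ht hψ)

lemma integral_g_sub_smul_comp_sub (β : ℝ) (φ : ℝ → E) (s t : ℝ) :
    ∫ u in s..t, g β (t - u) • φ (u - s) = rlIntegral β φ (t - s) := by
  simpa [rlIntegral] using
    intervalIntegral.integral_comp_sub_right (a := s) (b := t) (fun τ => g β (t - s - τ) • φ τ) s

lemma intervalIntegrable_rlIntegral_sub {β t : ℝ} {k : ℝ → ℝ → E} (ht : 0 ≤ t)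
    (hk : IntegrableOn (fun p : ℝ × ℝ => g β (t - p.1) • k (p.1 - p.2) p.2) (triangle t)) :
    IntervalIntegrable (fun s => rlIntegral β (k · s) (t - s)) volume 0 t := by
  simpa only [← integral_g_sub_smul_comp_sub] using
    intervalIntegrable_integral_triangle (K := fun u s => g β (t - u) • k (u - s) s) ht hk

lemma rlIntegral_integral_comp_sub {β t : ℝ} {k : ℝ → ℝ → E} (ht : 0 ≤ t)
    (hk : IntegrableOn (fun p : ℝ × ℝ => g β (t - p.1) • k (p.1 - p.2) p.2) (triangle t)) :
    rlIntegral β (fun u => ∫ s in (0 : ℝ)..u, k (u - s) s) t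
      = ∫ s in (0 : ℝ)..t, rlIntegral β (k · s) (t - s) := by
  have hswap := integral_integral_triangle_swap (K := fun u s => g β (t - u) • k (u - s) s) ht hk
  simp only [intervalIntegral.integral_smul] at hswap
  simp only [← integral_g_sub_smul_comp_sub]
  exact hswap

lemma integrableOn_triangle_g_sub_mul_g_sub {a b t : ℝ} (ha : 0 < a) (hb : 0 < b) (ht : 0 ≤ t) :
    IntegrableOn (fun p : ℝ × ℝ => g a (t - p.1) * g b (p.1 - p.2)) (triangle t) :=
  integrableOn_triangle_mul_comp_sub (a := fun u => g a (t - u))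
    ((intervalIntegrable_iff_integrableOn_Icc_of_le ht).1 (intervalIntegrable_g_sub ha t 0 t))
    ((intervalIntegrable_iff_integrableOn_Icc_of_le ht).1 (intervalIntegrable_g hb 0 t))

lemma rlIntegral_rlIntegral [CompleteSpace E] {a b t : ℝ} {φ : ℝ → E} (ha : 0 < a) (hb : 0 < b)
    (ht : 0 ≤ t) (hφ : ContinuousOn φ (Icc 0 t)) :
    rlIntegral a (rlIntegral b φ) t = rlIntegral (a + b) φ t := by
  have hφ_snd : ContinuousOn (fun p : ℝ × ℝ => φ p.2) (triangle t) :=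
    hφ.comp continuousOn_snd fun p hp => ⟨hp.1, hp.2.1.trans hp.2.2⟩
  have hint := (integrableOn_triangle_g_sub_mul_g_sub ha hb ht).smul_continuousOn hφ_snd
    (isCompact_triangle t)
  simp only [mul_smul] at hint
  have hkernel {s : ℝ} (hs : s < t) :
      rlIntegral a (fun τ => g b τ • φ s) (t - s) = g (a + b) (t - s) • φ s := by
    simp only [rlIntegral, smul_smul]
    rw [intervalIntegral.integral_smul_const, integral_g_sub_mul_g ha hb (sub_pos.2 hs)]
  calc rlIntegral a (rlIntegral b φ) t
      = ∫ s in (0 : ℝ)..t, rlIntegral a (fun τ => g b τ • φ s) (t - s) :=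
        rlIntegral_integral_comp_sub (k := fun τ s => g b τ • φ s) ht hint
    _ = rlIntegral (a + b) φ t := by
        refine intervalIntegral.integral_congr_ae ?_
        filter_upwards [Measure.ae_ne volume t] with s hst hs
        rw [uIoc_of_le ht] at hs
        exact hkernel (hs.2.lt_of_ne hst)

lemma rlIntegral_eq_rpow_smul {β t : ℝ} (φ : ℝ → E) (hβ : 0 < β) (ht : 0 ≤ t) :
    rlIntegral β φ t = t ^ β • rlIntegral β (fun σ => φ (t * σ)) 1 := by
  rcases ht.eq_or_lt with rfl | ht
  · simp [rlIntegral_zero_right, Real.zero_rpow hβ.ne']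
  have hrpow : t ^ β = t * t ^ (β - 1) := by
    rw [mul_comm, ← Real.rpow_add_one ht.ne', sub_add_cancel]
  have hscale : ∀ σ ∈ uIcc (0 : ℝ) 1,
      g β (t - t * σ) • φ (t * σ) = t ^ (β - 1) • g β (1 - σ) • φ (t * σ) := by
    intro σ hσ
    rw [uIcc_of_le zero_le_one] at hσ
    rw [show t - t * σ = t * (1 - σ) by ring, g_mul ht.le (sub_nonneg.2 hσ.2), mul_smul]
  have hsubst := intervalIntegral.smul_integral_comp_mul_left (a := 0) (b := 1)
    (fun s => g β (t - s) • φ s) t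
  rw [mul_zero, mul_one, intervalIntegral.integral_congr hscale,
    intervalIntegral.integral_smul] at hsubst
  rw [hrpow, mul_smul]
  exact hsubst.symm

lemma continuousOn_rlIntegral_diag {β r : ℝ} {c : ℝ → ℝ → E} (hβ : 0 < β)
    (hc : ContinuousOn (Function.uncurry c) (triangle r)) :
    ContinuousOn (fun t => rlIntegral β (c t) t) (Icc 0 r) := by
  have hmaps {t σ : ℝ} (ht : t ∈ Icc 0 r) (hσ : σ ∈ Icc (0 : ℝ) 1) :
      (t, t * σ) ∈ triangle r :=
    ⟨mul_nonneg ht.1 hσ.1, mul_le_of_le_one_right ht.1 hσ.2, ht.2⟩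
  obtain ⟨C, hC⟩ := (isCompact_triangle r).exists_bound_of_continuousOn hc
  have hscaled : ContinuousOn (fun t => rlIntegral β (fun σ => c t (t * σ)) 1) (Icc 0 r) := by
    intro t₀ ht₀
    refine intervalIntegral.continuousWithinAt_of_dominated_interval
      (bound := fun σ => ‖g β (1 - σ)‖ * C) ?_ ?_
      ((intervalIntegrable_g_sub hβ 1 0 1).norm.mul_const C) ?_
    · filter_upwards [self_mem_nhdsWithin] with t ht
      have hct : ContinuousOn (fun σ => c t (t * σ)) (Icc 0 1) :=
        hc.comp (f := fun σ => (t, t * σ)) (by fun_prop) fun σ hσ => hmaps ht hσ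
      exact (intervalIntegrable_g_sub_smul hβ zero_le_one hct).def'.aestronglyMeasurable
    · filter_upwards [self_mem_nhdsWithin] with t ht
      refine Filter.Eventually.of_forall fun σ hσ => ?_
      rw [uIoc_of_le zero_le_one] at hσ
      rw [norm_smul]
      gcongr
      exact hC (t, t * σ) (hmaps ht (Ioc_subset_Icc_self hσ))
    · refine Filter.Eventually.of_forall fun σ hσ => ?_
      rw [uIoc_of_le zero_le_one] at hσ
      have hcσ : ContinuousOn (fun t => c t (t * σ)) (Icc 0 r) :=
        hc.comp (f := fun t => (t, t * σ)) (by fun_prop) fun t ht =>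
          hmaps ht (Ioc_subset_Icc_self hσ)
      exact (hcσ t₀ ht₀).const_smul _
  refine ((Real.continuous_rpow_const hβ.le).continuousOn.smul hscaled).congr fun t ht => ?_
  exact rlIntegral_eq_rpow_smul (c t) hβ ht.1

lemma continuousOn_rlIntegral {β r : ℝ} {φ : ℝ → E} (hβ : 0 < β)
    (hφ : ContinuousOn φ (Icc 0 r)) : ContinuousOn (rlIntegral β φ) (Icc 0 r) :=
  continuousOn_rlIntegral_diag (c := fun _ => φ) hβ <|
    hφ.comp continuousOn_snd fun _ hp => ⟨hp.1, hp.2.1.trans hp.2.2⟩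

lemma hasDerivWithinAt_rlIntegral_one [CompleteSpace E] {r t : ℝ} {φ : ℝ → E}
    (hφ : ContinuousOn φ (Icc 0 r)) (ht : t ∈ Icc 0 r) :
    HasDerivWithinAt (rlIntegral 1 φ) (φ t) (Icc 0 r) t := by
  have hint : IntervalIntegrable φ volume 0 t :=
    (hφ.mono (Icc_subset_Icc_right ht.2)).intervalIntegrable_of_Icc ht.1
  have : Fact (t ∈ Icc 0 r) := ⟨ht⟩
  rw [show rlIntegral 1 φ = fun t => ∫ s in (0 : ℝ)..t, φ s from funext (rlIntegral_one φ)]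
  exact intervalIntegral.integral_hasDerivWithinAt_right hint
    (hφ.stronglyMeasurableAtFilter_nhdsWithin measurableSet_Icc t) (hφ t ht)

lemma hasDerivWithinAt_rlIntegral_one_add [CompleteSpace E] {β r t : ℝ} {φ : ℝ → E} (hβ : 0 < β)
    (hφ : ContinuousOn φ (Icc 0 r)) (ht : t ∈ Icc 0 r) :
    HasDerivWithinAt (rlIntegral (1 + β) φ) (rlIntegral β φ t) (Icc 0 r) t := by
  refine (hasDerivWithinAt_rlIntegral_one (continuousOn_rlIntegral hβ hφ) ht).congr_of_mem
    (fun s hs => ?_) ht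
  exact (rlIntegral_rlIntegral one_pos hβ hs.1 (hφ.mono (Icc_subset_Icc_right hs.2))).symm

end FractionalIntegral

section StronglyContinuousFamily

variable {𝕜 E F : Type*} [NontriviallyNormedField 𝕜] [NormedAddCommGroup E] [NormedSpace 𝕜 E]
  [NormedAddCommGroup F] [NormedSpace 𝕜 F]

lemma exists_norm_le_of_isCompact [CompleteSpace E] {ι : Type*} [TopologicalSpace ι]
    {S : ι → E →L[𝕜] F} {K : Set ι} (hK : IsCompact K)
    (hS : ∀ x, ContinuousOn (fun i => S i x) K) : ∃ M : NNReal, ∀ i ∈ K, ‖S i‖ ≤ M := by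
  have hpointwise (x : E) : ∃ C, ∀ i : K, ‖S i x‖ ≤ C :=
    (hK.exists_bound_of_continuousOn (hS x)).imp fun C hC i => hC i i.2
  obtain ⟨M, hM⟩ := banach_steinhaus hpointwise
  exact ⟨M.toNNReal, fun i hi => (hM ⟨i, hi⟩).trans (le_max_left M 0)⟩

lemma continuousOn_apply_of_isCompact [CompleteSpace E] {ι : Type*} [TopologicalSpace ι]
    {S : ι → E →L[𝕜] F} {K : Set ι} (hK : IsCompact K)
    (hS : ∀ x, ContinuousOn (fun i => S i x) K) :
    ContinuousOn (fun p : ι × E => S p.1 p.2) (K ×ˢ univ) := by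
  obtain ⟨M, hM⟩ := exists_norm_le_of_isCompact hK hS
  refine continuousOn_prod_of_continuousOn_lipschitzOnWith' _ M (fun i hi => ?_) fun x _ => hS x
  exact ((S i).lipschitz.weaken (hM i hi)).lipschitzOnWith

lemma continuousOn_triangle_sub_apply [CompleteSpace E] {S : ℝ → E →L[𝕜] F} {r : ℝ} {f : ℝ → E}
    (hS : ∀ x, ContinuousOn (fun t => S t x) (Icc 0 r)) (hf : ContinuousOn f (Icc 0 r)) :
    ContinuousOn (fun p : ℝ × ℝ => S (p.1 - p.2) (f p.2)) (triangle r) := by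
  have hf_snd : ContinuousOn (fun p : ℝ × ℝ => f p.2) (triangle r) :=
    hf.comp continuousOn_snd fun p hp => ⟨hp.1, hp.2.1.trans hp.2.2⟩
  refine (continuousOn_apply_of_isCompact isCompact_Icc hS).comp
    (f := fun p : ℝ × ℝ => (p.1 - p.2, f p.2))
    ((continuousOn_fst.sub continuousOn_snd).prodMk hf_snd) ?_
  rintro ⟨u, s⟩ ⟨hs, hsu, hu⟩
  exact ⟨⟨sub_nonneg.2 hsu, (sub_le_self u hs).trans hu⟩, mem_univ _⟩

variable [NormedSpace ℝ F]

/-- The convolution `(S * f)(t) = ∫_0^t S(t - s) f(s) ds` of a family of operators with a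
vector-valued function. -/
noncomputable def operatorConv (S : ℝ → E →L[𝕜] F) (f : ℝ → E) (t : ℝ) : F :=
  ∫ s in (0 : ℝ)..t, S (t - s) (f s)

variable [CompleteSpace E] {S : ℝ → E →L[𝕜] F}

lemma continuous_rlIntegral_apply {β t : ℝ} (hβ : 0 < β) (ht : 0 ≤ t)
    (hS : ∀ x, ContinuousOn (fun s => S s x) (Icc 0 t)) :
    Continuous fun z => rlIntegral β (fun s => S s z) t := by
  obtain ⟨M, hM⟩ := exists_norm_le_of_isCompact isCompact_Icc hS
  refine continuous_iff_continuousAt.2 fun z₀ =>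
    intervalIntegral.continuousAt_of_dominated_interval
      (bound := fun s => ‖g β (t - s)‖ * (M * (‖z₀‖ + 1))) ?_ ?_
      ((intervalIntegrable_g_sub hβ t 0 t).norm.mul_const _) ?_
  · exact .of_forall fun z => (intervalIntegrable_g_sub_smul hβ ht (hS z)).def'.aestronglyMeasurable
  · have hnear : ∀ᶠ z in nhds z₀, ‖z‖ < ‖z₀‖ + 1 :=
      continuous_norm.continuousAt.eventually_lt_const (lt_add_one _)
    filter_upwards [hnear] with z hz
    refine .of_forall fun s hs => ?_
    rw [uIoc_of_le ht] at hs
    rw [norm_smul]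
    gcongr
    exact (S s).le_of_opNorm_le_of_le (hM s (Ioc_subset_Icc_self hs)) hz.le
  · exact .of_forall fun s _ => ((S s).continuous.const_smul _).continuousAt

lemma continuousOn_operatorConv {r : ℝ} {f : ℝ → E}
    (hS : ∀ x, ContinuousOn (fun t => S t x) (Icc 0 r)) (hf : ContinuousOn f (Icc 0 r)) :
    ContinuousOn (operatorConv S f) (Icc 0 r) := by
  have hdiag := continuousOn_rlIntegral_diag (c := fun t s => S (t - s) (f s)) one_pos
    (continuousOn_triangle_sub_apply hS hf)
  simp only [rlIntegral_one] at hdiag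
  exact hdiag

lemma integrableOn_triangle_g_sub_smul_apply {β t : ℝ} {f : ℝ → E} (hβ : 0 < β) (ht : 0 ≤ t)
    (hS : ∀ x, ContinuousOn (fun t => S t x) (Icc 0 t)) (hf : ContinuousOn f (Icc 0 t)) :
    IntegrableOn (fun p : ℝ × ℝ => g β (t - p.1) • S (p.1 - p.2) (f p.2)) (triangle t) := by
  simpa only [g_one, mul_one] using
    (integrableOn_triangle_g_sub_mul_g_sub hβ one_pos ht).smul_continuousOn
      (continuousOn_triangle_sub_apply hS hf) (isCompact_triangle t)

lemma rlIntegral_operatorConv {β t : ℝ} {f : ℝ → E} (hβ : 0 < β) (ht : 0 ≤ t)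
    (hS : ∀ x, ContinuousOn (fun t => S t x) (Icc 0 t)) (hf : ContinuousOn f (Icc 0 t)) :
    rlIntegral β (operatorConv S f) t
      = ∫ s in (0 : ℝ)..t, rlIntegral β (fun τ => S τ (f s)) (t - s) :=
  rlIntegral_integral_comp_sub (k := fun τ s => S τ (f s)) ht
    (integrableOn_triangle_g_sub_smul_apply hβ ht hS hf)

end StronglyContinuousFamily

section StrongSolution

variable {X : Type*} [NormedAddCommGroup X] [NormedSpace ℂ X] [CompleteSpace X]

lemma isStrongSolution_of_eq_rlIntegral {α r : ℝ} {A : X →ₗ.[ℂ] X} {f u Au : ℝ → X} {x y : X}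
    (hα1 : 1 < α) (hα2 : α < 2) (hr : 0 ≤ r) (hf : ContinuousOn f (Icc 0 r))
    (hgraph : ∀ t ∈ Icc 0 r, (u t, Au t) ∈ A.graph) (hAu : ContinuousOn Au (Icc 0 r))
    (hu : ∀ t ∈ Icc 0 r, u t = x + t • y + rlIntegral α (fun s => Au s + f s) t) :
    IsStrongSolution α A r f x y u := by
  set h : ℝ → X := fun s => Au s + f s
  have hh : ContinuousOn h (Icc 0 r) := hAu.add hf
  have hα : 0 < α - 1 := by linarith
  have h0 : (0 : ℝ) ∈ Icc 0 r := ⟨le_rfl, hr⟩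
  have hu_deriv : ∀ t ∈ Icc 0 r,
      HasDerivWithinAt u (y + rlIntegral (α - 1) h t) (Icc 0 r) t := by
    intro t ht
    have haffine : HasDerivWithinAt (fun t : ℝ => x + t • y) y (Icc 0 r) t := by
      simpa using (((hasDerivAt_id t).smul_const y).const_add x).hasDerivWithinAt
    have hfrac := hasDerivWithinAt_rlIntegral_one_add hα hh ht
    rw [add_sub_cancel] at hfrac
    exact (haffine.add hfrac).congr_of_mem hu ht
  have hw : EqOn (rlIntegral (2 - α) fun s => u s - x - s • y) (rlIntegral (1 + 1) h)
      (Icc 0 r) := by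
    intro t ht
    have hsub : Icc 0 t ⊆ Icc 0 r := Icc_subset_Icc_right ht.2
    calc rlIntegral (2 - α) (fun s => u s - x - s • y) t
        = rlIntegral (2 - α) (rlIntegral α h) t :=
          rlIntegral_congr ht.1 fun s hs => by simp only [hu s (hsub hs)]; abel
      _ = rlIntegral (1 + 1) h t := by
          rw [rlIntegral_rlIntegral (by linarith) (by linarith) ht.1 (hh.mono hsub)]
          norm_num
  refine ⟨Au, fun t => y + rlIntegral (α - 1) h t, rlIntegral 1 h, h,
    fun t ht => (hu_deriv t ht).continuousWithinAt, hgraph, hAu, hu_deriv,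
    continuousOn_const.add (continuousOn_rlIntegral hα hh),
    fun t ht => (hasDerivWithinAt_rlIntegral_one_add one_pos hh ht).congr_of_mem hw ht,
    fun t ht => hasDerivWithinAt_rlIntegral_one hh ht, hh, fun t _ => rfl, ?_, ?_⟩
  · simpa [rlIntegral_zero_right] using hu 0 h0
  · simp [rlIntegral_zero_right]

end StrongSolution

lemma integral_mem_of_isClosed {Ω 𝕜 F : Type*} [MeasurableSpace Ω] {μ : Measure Ω} [RCLike 𝕜]
    [NormedAddCommGroup F] [NormedSpace 𝕜 F] [NormedSpace ℝ F] [CompleteSpace F]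
    {G : Submodule 𝕜 F} (hG : IsClosed (G : Set F)) {φ : Ω → F} (hφ : ∀ᵐ ω ∂μ, φ ω ∈ G) :
    ∫ ω, φ ω ∂μ ∈ G := by
  by_cases hint : Integrable φ μ
  · have : IsClosed (G.toAddSubgroup : Set F) := hG
    have hquot : ∫ ω, G.mkQL (φ ω) ∂μ = 0 :=
      integral_eq_zero_of_ae (hφ.mono fun ω hω => (Submodule.Quotient.mk_eq_zero G).2 hω)
    rw [ContinuousLinearMap.integral_comp_comm _ hint] at hquot
    exact (Submodule.Quotient.mk_eq_zero G).1 hquot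
  · rw [integral_undef hint]
    exact G.zero_mem

section ClosedGraph

variable {X : Type*} [NormedAddCommGroup X] [NormedSpace ℂ X] [CompleteSpace X]
  {A : X →ₗ.[ℂ] X} {t : ℝ} {p q : ℝ → X}

lemma intervalIntegral_mem_graph (hA : IsClosed (A.graph : Set (X × X))) (ht : 0 ≤ t)
    (hp : IntervalIntegrable p volume 0 t) (hq : IntervalIntegrable q volume 0 t)
    (hpq : ∀ s ∈ Icc 0 t, (p s, q s) ∈ A.graph) :
    (∫ s in (0 : ℝ)..t, p s, ∫ s in (0 : ℝ)..t, q s) ∈ A.graph := by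
  rw [intervalIntegral.integral_of_le ht, intervalIntegral.integral_of_le ht,
    ← integral_pair hp.1 hq.1]
  exact integral_mem_of_isClosed hA <| ae_restrict_of_forall_mem measurableSet_Ioc
    fun s hs => hpq s (Ioc_subset_Icc_self hs)

lemma rlIntegral_mem_graph {β : ℝ} (hA : IsClosed (A.graph : Set (X × X))) (hβ : 0 < β)
    (ht : 0 ≤ t) (hp : ContinuousOn p (Icc 0 t)) (hq : ContinuousOn q (Icc 0 t))
    (hpq : ∀ s ∈ Icc 0 t, (p s, q s) ∈ A.graph) :
    (rlIntegral β p t, rlIntegral β q t) ∈ A.graph :=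
  intervalIntegral_mem_graph hA ht (intervalIntegrable_g_sub_smul hβ ht hp)
    (intervalIntegrable_g_sub_smul hβ ht hq)
    fun s hs => A.graph.smul_of_tower_mem (g β (t - s)) (hpq s hs)

end ClosedGraph

lemma integral_Pa_sub_apply {X : Type*} [NormedAddCommGroup X] [NormedSpace ℂ X] [CompleteSpace X]
    {α t : ℝ} {S : ℝ → X →L[ℂ] X} {f : ℝ → X} (hα : 1 < α) (ht : 0 ≤ t)
    (hS : ∀ x, ContinuousOn (fun s => S s x) (Icc 0 t)) (hf : ContinuousOn f (Icc 0 t)) :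
    ∫ s in (0 : ℝ)..t, Pa α S (t - s) (f s) = rlIntegral (α - 1) (operatorConv S f) t :=
  (rlIntegral_operatorConv (sub_pos.2 hα) ht hS hf).symm

/-- `S` is an `α`-times resolvent family generated by `A`. Invariance of the domain of `A` and
commutation of `A` with `S t` are encoded together as invariance of the graph of `A`. -/
structure IsResolventFamily {X : Type*} [NormedAddCommGroup X] [NormedSpace ℂ X]
    (α : ℝ) (A : X →ₗ.[ℂ] X) (S : ℝ → X →L[ℂ] X) : Prop where
  continuousOn (x : X) : ContinuousOn (fun t => S t x) (Ici 0)
  apply_zero : S 0 = 1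
  map_graph {t : ℝ} (ht : 0 ≤ t) {x y : X} (hxy : (x, y) ∈ A.graph) : (S t x, S t y) ∈ A.graph
  apply_eq {t : ℝ} (ht : 0 ≤ t) {x y : X} (hxy : (x, y) ∈ A.graph) :
    S t x = x + rlIntegral α (fun s => S s y) t

namespace IsResolventFamily

variable {X : Type*} [NormedAddCommGroup X] [NormedSpace ℂ X]
  {α : ℝ} {A : X →ₗ.[ℂ] X} {S : ℝ → X →L[ℂ] X}

lemma continuousOn_Icc (hS : IsResolventFamily α A S) (r : ℝ) (x : X) :
    ContinuousOn (fun t => S t x) (Icc 0 r) :=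
  (hS.continuousOn x).mono Icc_subset_Ici_self

variable [CompleteSpace X]

lemma rlIntegral_apply_mem_graph (hS : IsResolventFamily α A S) (hα : 0 < α)
    (hA : IsClosed (A.graph : Set (X × X))) (hdense : Dense (A.domain : Set X)) {t : ℝ}
    (ht : 0 ≤ t) (z : X) : (rlIntegral α (fun s => S s z) t, S t z - z) ∈ A.graph := by
  have hcont : Continuous fun z => (rlIntegral α (fun s => S s z) t, S t z - z) :=
    (continuous_rlIntegral_apply hα ht (hS.continuousOn_Icc t)).prodMk
      ((S t).continuous.sub continuous_id)
  refine isClosed_property hdense.denseRange_val (hA.preimage hcont) (fun x => ?_) z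
  have hx : (↑x, A x) ∈ A.graph := A.mem_graph x
  have hSx : S t x - x = rlIntegral α (fun s => S s (A x)) t := by
    rw [hS.apply_eq ht hx, add_sub_cancel_left]
  change (_, S t x - x) ∈ A.graph
  rw [hSx]
  exact rlIntegral_mem_graph hA hα ht (hS.continuousOn_Icc t x) (hS.continuousOn_Icc t (A x))
    fun s hs => hS.map_graph hs.1 hx

lemma rlIntegral_operatorConv_mem_graph (hS : IsResolventFamily α A S) (hα : 0 < α)
    (hA : IsClosed (A.graph : Set (X × X))) (hdense : Dense (A.domain : Set X)) {f : ℝ → X} {t : ℝ}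
    (ht : 0 ≤ t) (hf : ContinuousOn f (Icc 0 t)) :
    (rlIntegral α (operatorConv S f) t, operatorConv S f t - rlIntegral 1 f t) ∈ A.graph := by
  have hSt := hS.continuousOn_Icc t
  have hSf : IntervalIntegrable (fun s => S (t - s) (f s)) volume 0 t :=
    ((continuousOn_triangle_sub_apply hSt hf).comp (f := fun s => (t, s)) (by fun_prop)
      fun s hs => ⟨hs.1, hs.2, le_rfl⟩).intervalIntegrable_of_Icc ht
  have hf_int : IntervalIntegrable f volume 0 t := hf.intervalIntegrable_of_Icc ht
  rw [rlIntegral_operatorConv hα ht hSt hf, operatorConv, rlIntegral_one,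
    ← intervalIntegral.integral_sub hSf hf_int]
  exact intervalIntegral_mem_graph hA ht
    (intervalIntegrable_rlIntegral_sub (k := fun τ s => S τ (f s)) ht
      (integrableOn_triangle_g_sub_smul_apply hα ht hSt hf))
    (hSf.sub hf_int)
    fun s hs => hS.rlIntegral_apply_mem_graph hα hA hdense (sub_nonneg.2 hs.2) (f s)

lemma operatorConv_eq_rlIntegral_one (hS : IsResolventFamily α A S) (hα : 1 < α)
    (hA : IsClosed (A.graph : Set (X × X))) (hdense : Dense (A.domain : Set X)) {f w : ℝ → X}
    {t : ℝ} (ht : 0 ≤ t) (hf : ContinuousOn f (Icc 0 t)) (hw : ContinuousOn w (Icc 0 t))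
    (hgraph : ∀ s ∈ Icc 0 t, (rlIntegral (α - 1) (operatorConv S f) s, w s) ∈ A.graph) :
    operatorConv S f t = rlIntegral 1 (fun s => w s + f s) t := by
  have hα0 : 0 < α - 1 := sub_pos.2 hα
  have hF : ContinuousOn (operatorConv S f) (Icc 0 t) :=
    continuousOn_operatorConv (hS.continuousOn_Icc t) hf
  have hgraph_int : (rlIntegral α (operatorConv S f) t, rlIntegral 1 w t) ∈ A.graph := by
    have hmem := rlIntegral_mem_graph hA one_pos ht (continuousOn_rlIntegral hα0 hF) hw hgraph
    rwa [rlIntegral_rlIntegral one_pos hα0 ht hF, add_sub_cancel] at hmem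
  have hAF := hS.rlIntegral_operatorConv_mem_graph (by linarith) hA hdense ht hf
  rw [rlIntegral_add one_pos ht hw hf, ← sub_eq_iff_eq_add]
  exact A.mem_graph_snd_inj hAF hgraph_int rfl

lemma integral_Pa_sub_apply_eq (hS : IsResolventFamily α A S) (hα : 1 < α)
    (hA : IsClosed (A.graph : Set (X × X))) (hdense : Dense (A.domain : Set X)) {f w : ℝ → X}
    {t : ℝ} (ht : 0 ≤ t) (hf : ContinuousOn f (Icc 0 t)) (hw : ContinuousOn w (Icc 0 t))
    (hgraph : ∀ s ∈ Icc 0 t, (∫ τ in (0 : ℝ)..s, Pa α S (s - τ) (f τ), w s) ∈ A.graph) :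
    ∫ s in (0 : ℝ)..t, Pa α S (t - s) (f s) = rlIntegral α (fun s => w s + f s) t := by
  have hPa {s : ℝ} (hs : s ∈ Icc 0 t) : ∫ τ in (0 : ℝ)..s, Pa α S (s - τ) (f τ)
      = rlIntegral (α - 1) (operatorConv S f) s :=
    integral_Pa_sub_apply hα hs.1 (hS.continuousOn_Icc s) (hf.mono (Icc_subset_Icc_right hs.2))
  have hF : EqOn (operatorConv S f) (rlIntegral 1 fun s => w s + f s) (Icc 0 t) := by
    intro s hs
    have hsub : Icc 0 s ⊆ Icc 0 t := Icc_subset_Icc_right hs.2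
    exact hS.operatorConv_eq_rlIntegral_one hα hA hdense hs.1 (hf.mono hsub) (hw.mono hsub)
      fun τ hτ => hPa (hsub hτ) ▸ hgraph τ (hsub hτ)
  rw [hPa (right_mem_Icc.2 ht), rlIntegral_congr ht hF,
    rlIntegral_rlIntegral (sub_pos.2 hα) one_pos ht (hw.fun_add hf), sub_add_cancel]

lemma rlIntegral_one_apply (hS : IsResolventFamily α A S) (hα : 0 < α) {y z : X}
    (hyz : (y, z) ∈ A.graph) {t : ℝ} (ht : 0 ≤ t) :
    rlIntegral 1 (fun s => S s y) t
      = t • y + rlIntegral α (rlIntegral 1 fun s => S s z) t := by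
  have hSz := hS.continuousOn_Icc t z
  calc rlIntegral 1 (fun s => S s y) t
      = rlIntegral 1 (fun s => y + rlIntegral α (fun τ => S τ z) s) t :=
        rlIntegral_congr ht fun s hs => hS.apply_eq hs.1 hyz
    _ = t • y + rlIntegral 1 (rlIntegral α fun τ => S τ z) t := by
        rw [rlIntegral_add one_pos ht continuousOn_const (continuousOn_rlIntegral hα hSz),
          rlIntegral_one, intervalIntegral.integral_const, sub_zero]
    _ = t • y + rlIntegral α (rlIntegral 1 fun s => S s z) t := by
        rw [rlIntegral_rlIntegral one_pos hα ht hSz, rlIntegral_rlIntegral hα one_pos ht hSz,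
          add_comm α]

lemma apply_add_rlIntegral_one_apply_mem_graph (hS : IsResolventFamily α A S)
    (hA : IsClosed (A.graph : Set (X × X))) {x y Ax Ay : X} (hAx : (x, Ax) ∈ A.graph)
    (hAy : (y, Ay) ∈ A.graph) {t : ℝ} (ht : 0 ≤ t) :
    (S t x + rlIntegral 1 (fun s => S s y) t, S t Ax + rlIntegral 1 (fun s => S s Ay) t)
      ∈ A.graph :=
  A.graph.add_mem (hS.map_graph ht hAx) <|
    rlIntegral_mem_graph hA one_pos ht (hS.continuousOn_Icc t y) (hS.continuousOn_Icc t Ay)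
      fun _ hs => hS.map_graph hs.1 hAy

lemma apply_add_rlIntegral_one_apply_eq (hS : IsResolventFamily α A S) (hα : 0 < α)
    {x y Ax Ay : X} (hAx : (x, Ax) ∈ A.graph) (hAy : (y, Ay) ∈ A.graph) {t : ℝ} (ht : 0 ≤ t) :
    S t x + rlIntegral 1 (fun s => S s y) t
      = x + t • y + rlIntegral α (fun s => S s Ax + rlIntegral 1 (fun τ => S τ Ay) s) t := by
  rw [rlIntegral_add hα ht (hS.continuousOn_Icc t Ax)
    (continuousOn_rlIntegral one_pos (hS.continuousOn_Icc t Ay)),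
    hS.apply_eq ht hAx, hS.rlIntegral_one_apply hα hAy ht]
  abel

end IsResolventFamily

theorem stmt_12
    {X : Type*} [NormedAddCommGroup X] [NormedSpace ℂ X] [CompleteSpace X]
    (α : ℝ) (hα1 : 1 < α) (hα2 : α < 2)
    (A : X →ₗ.[ℂ] X) (hA_closed : IsClosed (A.graph : Set (X × X)))
    (hA_dense : Dense (A.domain : Set X))
    (S : ℝ → X →L[ℂ] X)
    (hS_cont : ∀ x : X, ContinuousOn (fun t => S t x) (Ici (0:ℝ)))
    (hS_zero : S 0 = 1)
    (hS_dom : ∀ t : ℝ, 0 ≤ t → ∀ x ∈ A.domain, S t x ∈ A.domain)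
    (hS_comm : ∀ t : ℝ, 0 ≤ t → ∀ x y : X, (x, y) ∈ A.graph → (S t x, S t y) ∈ A.graph)
    (hS_eq : ∀ t : ℝ, 0 ≤ t → ∀ x y : X, (x, y) ∈ A.graph →
      S t x = x + ∫ s in (0:ℝ)..t, g α (t - s) • S s y)
    (r : ℝ) (hr : 0 < r) (f : ℝ → X) (hf : ContinuousOn f (Icc 0 r))
    (x y : X) (hx : x ∈ A.domain) (hy : y ∈ A.domain)
    (hw : ∃ w : ℝ → X, ContinuousOn w (Icc 0 r) ∧
      ∀ t ∈ Icc (0:ℝ) r,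
        ((∫ s in (0:ℝ)..t, Pa α S (t - s) (f s)), w t) ∈ A.graph) :
    IsStrongSolution α A r f x y
      (fun t => S t x + (∫ s in (0:ℝ)..t, S s y) + ∫ s in (0:ℝ)..t, Pa α S (t - s) (f s)) := by
  have hS : IsResolventFamily α A S :=
    ⟨hS_cont, hS_zero, fun ht _ _ => hS_comm _ ht _ _, fun ht _ _ => hS_eq _ ht _ _⟩
  have hα0 : 0 < α := by linarith
  obtain ⟨w, hw, hgraph⟩ := hw
  obtain ⟨Ax, hAx⟩ := LinearPMap.mem_domain_iff.1 hx
  obtain ⟨Ay, hAy⟩ := LinearPMap.mem_domain_iff.1 hy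
  have hAv : ContinuousOn (fun t => S t Ax + rlIntegral 1 (fun s => S s Ay) t) (Icc 0 r) :=
    (hS.continuousOn_Icc r Ax).add (continuousOn_rlIntegral one_pos (hS.continuousOn_Icc r Ay))
  simp only [← rlIntegral_one fun s => S s y]
  refine isStrongSolution_of_eq_rlIntegral hα1 hα2 hr.le hf (fun t ht => A.graph.add_mem
    (hS.apply_add_rlIntegral_one_apply_mem_graph hA_closed hAx hAy ht.1) (hgraph t ht))
    (hAv.add hw) fun t ht => ?_
  have hsub : Icc 0 t ⊆ Icc 0 r := Icc_subset_Icc_right ht.2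
  simp only [add_assoc (_ + _) (w _)]
  rw [rlIntegral_add hα0 ht.1 (hAv.mono hsub) ((hw.fun_add hf).mono hsub),
    hS.integral_Pa_sub_apply_eq hα1 hA_closed hA_dense ht.1 (hf.mono hsub) (hw.mono hsub)
      fun s hs => hgraph s (hsub hs),
    hS.apply_add_rlIntegral_one_apply_eq hα0 hAx hAy ht.1, add_assoc]
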